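/- On an open subset of ℝ³ with coordinates (x¹, x², x³) = (x, y, z), let (g_{ij}) be a smooth Riemannian metric and let ρ, p be smooth functions. Define the symmetric tensor field T^{ij} := ρ·δ^i_z δ^j_z + p·g^{ij}, i.e. T^{33} = ρ + p g^{33} and T^{ij} = p g^{ij} for all other index pairs. Then the momentum constraint ∇_j T_i^{ j} = 0 (for i = 1,2,3) holds if and only if for each i = 1,2,3: ∂_z(ρ|g| g_{i3}) = |g|·((1/2)ρ ∂_i g_{33} − ∂_i p), where |g| = (det(g_{ij}))^{1/2}. -/

import Mathlib

open Matrix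

noncomputable section

abbrev V3 := Fin 3 → ℝ

/-- Partial derivative `∂ᵢ f` on `ℝ³`. -/
def pd (i : Fin 3) (f : V3 → ℝ) (x : V3) : ℝ := fderiv ℝ f x (Pi.single i 1)

/-- Christoffel symbols `Γ^i_{jk} = (1/2) g^{il}(∂_j g_{lk} + ∂_k g_{jl} - ∂_l g_{jk})`. -/
def christoffel (g : V3 → Matrix (Fin 3) (Fin 3) ℝ) (i j k : Fin 3) (x : V3) : ℝ :=
  (1 / 2) * ∑ l, (g x)⁻¹ i l *
    (pd j (fun y => g y l k) x + pd k (fun y => g y j l) x - pd l (fun y => g y j k) x)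

/-- `|g| = (det g)^{1/2}`. -/
def sqrtDet (g : V3 → Matrix (Fin 3) (Fin 3) ℝ) (x : V3) : ℝ := Real.sqrt (g x).det

/-- Covariant divergence of a contravariant symmetric 2-tensor:
`∇_j T^{ij} = |g|⁻¹ ∂_j(|g| T^{ij}) + Γ^i_{jk} T^{jk}`. -/
def covDivUp (g T : V3 → Matrix (Fin 3) (Fin 3) ℝ) (i : Fin 3) (x : V3) : ℝ :=
  (sqrtDet g x)⁻¹ * (∑ j, pd j (fun y => sqrtDet g y * T y i j) x) +
    ∑ j, ∑ k, christoffel g i j k x * T x j k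

/-- Covariant divergence in mixed form, for a contravariant tensor `T^{ij}`:
`∇_j T_i^{ j} = |g|⁻¹ ∂_j(|g| g_{ik} T^{kj}) - (1/2) T^{jk} ∂_i g_{jk}`. -/
def covDivLow (g T : V3 → Matrix (Fin 3) (Fin 3) ℝ) (i : Fin 3) (x : V3) : ℝ :=
  (sqrtDet g x)⁻¹ * (∑ j, pd j (fun y => sqrtDet g y * (∑ k, g y i k * T y k j)) x) -
    (1 / 2) * ∑ j, ∑ k, T x j k * pd i (fun y => g y j k) x

theorem pd_jacobi (g : V3 → Matrix (Fin 3) (Fin 3) ℝ) (x : V3) (i : Fin 3)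
    (hd : ∀ a b, DifferentiableAt ℝ (fun y => g y a b) x) :
    DifferentiableAt ℝ (fun y => (g y).det) x ∧
    pd i (fun y => (g y).det) x =
      ∑ j, ∑ k, (g x).adjugate k j * pd i (fun y => g y j k) x := by
  have H := fun a b => (hd a b).hasFDerivAt
  have e : (fun y => (g y).det) = fun y =>
      g y 0 0 * g y 1 1 * g y 2 2 - g y 0 0 * g y 1 2 * g y 2 1
      - g y 0 1 * g y 1 0 * g y 2 2 + g y 0 1 * g y 1 2 * g y 2 0
      + g y 0 2 * g y 1 0 * g y 2 1 - g y 0 2 * g y 1 1 * g y 2 0 := by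
    funext y; rw [Matrix.det_fin_three]
  have K := (((((((H 0 0).mul (H 1 1)).mul (H 2 2)).sub (((H 0 0).mul (H 1 2)).mul (H 2 1))).sub
    (((H 0 1).mul (H 1 0)).mul (H 2 2))).add (((H 0 1).mul (H 1 2)).mul (H 2 0))).add
    (((H 0 2).mul (H 1 0)).mul (H 2 1))).sub (((H 0 2).mul (H 1 1)).mul (H 2 0))
  have K' := K.congr_of_eventuallyEq (f₁ := fun y => (g y).det) (by
    rw [e]; exact Filter.Eventually.of_forall fun y => rfl)
  refine ⟨K'.differentiableAt, ?_⟩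
  unfold pd
  rw [K'.fderiv, Matrix.adjugate_fin_three]
  simp [Fin.sum_univ_three]
  ring

theorem pd_mul (f h : V3 → ℝ) (x : V3) (i : Fin 3) (hf : DifferentiableAt ℝ f x)
    (hh : DifferentiableAt ℝ h x) :
    pd i (fun y => f y * h y) x = f x * pd i h x + h x * pd i f x := by
  unfold pd
  rw [fderiv_fun_mul hf hh]
  simp

theorem pd_add (f h : V3 → ℝ) (x : V3) (i : Fin 3) (hf : DifferentiableAt ℝ f x)
    (hh : DifferentiableAt ℝ h x) :
    pd i (fun y => f y + h y) x = pd i f x + pd i h x := by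
  unfold pd
  rw [fderiv_fun_add hf hh]
  simp

theorem pd_sqrtDet (g : V3 → Matrix (Fin 3) (Fin 3) ℝ) (x : V3) (i : Fin 3)
    (hd : ∀ a b, DifferentiableAt ℝ (fun y => g y a b) x) (hpos : (g x).PosDef) :
    DifferentiableAt ℝ (sqrtDet g) x ∧
    pd i (sqrtDet g) x = (1 / 2) * sqrtDet g x *
      ∑ j, ∑ k, (g x)⁻¹ j k * pd i (fun y => g y j k) x := by
  obtain ⟨h1, h2⟩ := pd_jacobi g x i hd
  have hdet : 0 < (g x).det := hpos.det_pos
  have K := h1.hasFDerivAt.sqrt hdet.ne'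
  have K' : HasFDerivAt (sqrtDet g) _ x := K
  refine ⟨K'.differentiableAt, ?_⟩
  have hs : 0 < Real.sqrt (g x).det := Real.sqrt_pos.2 hdet
  have hsq : Real.sqrt (g x).det ^ 2 = (g x).det := Real.sq_sqrt hdet.le
  have hsym : ∀ j k, (g x)⁻¹ j k = (g x).det⁻¹ * (g x).adjugate k j := by
    intro j k
    have := hpos.inv.isHermitian.apply j k
    simp only [star_trivial] at this
    rw [← this, Matrix.inv_def]
    simp
  have e : pd i (sqrtDet g) x = 1 / (2 * Real.sqrt (g x).det) * pd i (fun y => (g y).det) x := by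
    unfold pd
    rw [K'.fderiv]; simp
  rw [e, h2]
  simp only [hsym, mul_assoc, ← Finset.mul_sum, sqrtDet]
  set S := ∑ j, ∑ k, (g x).adjugate k j * pd i (fun y => g y j k) x
  field_simp
  rw [hsq, mul_comm]

/-- **Equation (3) in the proof of Proposition 3.2**: for
`T^{ij} = ρ δ^i_z δ^j_z + p g^{ij}` (coordinates `(x,y,z) = (x¹,x²,x³)`, index `z = 2`),
the momentum constraint `∇_j T_i^{ j} = 0` holds iff
`(ρ|g|g_{iz})_{,z} = |g| ((1/2) ρ g_{zz,i} - p_{,i})` for each `i`. -/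
theorem momentum_constraint_uu_case
    (U : Set V3) (hU : IsOpen U)
    (g : V3 → Matrix (Fin 3) (Fin 3) ℝ) (ρ p : V3 → ℝ)
    (hg_smooth : ∀ i j, ContDiffOn ℝ (⊤ : ℕ∞) (fun x => g x i j) U)
    (hg_pos : ∀ x ∈ U, (g x).PosDef)
    (hρ : ContDiffOn ℝ (⊤ : ℕ∞) ρ U) (hp : ContDiffOn ℝ (⊤ : ℕ∞) p U) :
    let T : V3 → Matrix (Fin 3) (Fin 3) ℝ := fun x =>
      Matrix.of fun i j =>
        (if i = 2 ∧ j = 2 then ρ x else 0) + p x * (g x)⁻¹ i j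
    ∀ x ∈ U, ∀ i,
      (covDivLow g T i x = 0 ↔
        pd 2 (fun y => ρ y * sqrtDet g y * g y i 2) x =
          sqrtDet g x * ((1 / 2) * ρ x * pd i (fun y => g y 2 2) x - pd i p x)) := by
  intro T x hx i
  have hxU : U ∈ nhds x := hU.mem_nhds hx
  have hd : ∀ a b, DifferentiableAt ℝ (fun y => g y a b) x := fun a b =>
    ((hg_smooth a b).contDiffAt hxU).differentiableAt (by simp)
  have hρd : DifferentiableAt ℝ ρ x := (hρ.contDiffAt hxU).differentiableAt (by simp)
  have hpd : DifferentiableAt ℝ p x := (hp.contDiffAt hxU).differentiableAt (by simp)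
  obtain ⟨hsd, hs⟩ := pd_sqrtDet g x i hd (hg_pos x hx)
  have hspos : 0 < sqrtDet g x := Real.sqrt_pos.2 (hg_pos x hx).det_pos
  have key : ∀ y ∈ U, ∀ j, ∑ k, g y i k * T y k j =
      (if j = 2 then ρ y * g y i 2 else 0) + (if i = j then p y else 0) := by
    intro y hy j
    have hu : IsUnit (g y).det := (hg_pos y hy).det_pos.ne'.isUnit
    have h1 : ∑ k, g y i k * (g y)⁻¹ k j = if i = j then 1 else 0 := by
      have := congrFun (congrFun (Matrix.mul_nonsing_inv (g y) hu) i) j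
      rwa [Matrix.mul_apply, Matrix.one_apply] at this
    have h2 : ∑ k, g y i k * T y k j =
        (if j = 2 then ρ y * g y i 2 else 0) + p y * ∑ k, g y i k * (g y)⁻¹ k j := by
      simp only [T, Matrix.of_apply, Fin.sum_univ_three]
      by_cases hj : j = 2 <;> simp [hj] <;> ring
    rw [h2, h1]; simp
  have hpdj : ∀ j, pd j (fun y => sqrtDet g y * (∑ k, g y i k * T y k j)) x =
      (if j = 2 then pd 2 (fun y => ρ y * sqrtDet g y * g y i 2) x else 0) +
      (if i = j then pd i (fun y => sqrtDet g y * p y) x else 0) := by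
    intro j
    have e : (fun y => sqrtDet g y * (∑ k, g y i k * T y k j)) =ᶠ[nhds x] fun y =>
        (if j = 2 then ρ y * sqrtDet g y * g y i 2 else 0) +
        (if i = j then sqrtDet g y * p y else 0) := by
      filter_upwards [hxU] with y hy
      rw [key y hy j]
      split_ifs <;> ring
    have e2 : pd j (fun y => sqrtDet g y * (∑ k, g y i k * T y k j)) x = pd j (fun y =>
        (if j = 2 then ρ y * sqrtDet g y * g y i 2 else 0) +
        (if i = j then sqrtDet g y * p y else 0)) x := by
      unfold pd; rw [e.fderiv_eq]
    have d1 : DifferentiableAt ℝ (fun y => ρ y * sqrtDet g y * g y i 2) x :=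
      (hρd.mul hsd).mul (hd i 2)
    have d2 : DifferentiableAt ℝ (fun y => sqrtDet g y * p y) x := hsd.mul hpd
    have z : pd j (fun _ => (0 : ℝ)) x = 0 := by simp [pd]
    rw [e2]
    by_cases h1 : j = 2 <;> by_cases h2 : i = j
    · simp only [h1, h2, if_true]
      rw [h2, h1] at d1
      exact pd_add _ _ _ _ d1 d2
    · simp only [h2, if_false, add_zero]
      simp only [h1, if_true]
    · simp only [h1, if_false, zero_add, h2, if_true]
    · simp only [h1, if_false, zero_add, h2, z]
  have hT : ∑ j, ∑ k, T x j k * pd i (fun y => g y j k) x =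
      ρ x * pd i (fun y => g y 2 2) x +
        p x * ∑ j, ∑ k, (g x)⁻¹ j k * pd i (fun y => g y j k) x := by
    simp only [T, Matrix.of_apply, Fin.sum_univ_three]
    simp
    ring
  have hL : covDivLow g T i x = (sqrtDet g x)⁻¹ *
      (pd 2 (fun y => ρ y * sqrtDet g y * g y i 2) x -
        sqrtDet g x * ((1 / 2) * ρ x * pd i (fun y => g y 2 2) x - pd i p x)) := by
    unfold covDivLow
    rw [hT]
    simp only [hpdj, Finset.sum_add_distrib, Finset.sum_ite_eq, Finset.sum_ite_eq',
      Finset.mem_univ, if_true]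
    rw [pd_mul _ _ _ _ hsd hpd, hs]
    field_simp
    ring
  rw [hL, mul_eq_zero, sub_eq_zero]
  simp [hspos.ne']
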